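/- If ℓ ≥ 1, r ≥ 3, and n ≥ max{3r−5, 2ℓ+3}, then the minimum of |H_n^{(r)}(C)| over all semi-valid tuples C of length 2ℓ+1 in Ω_n is strictly less than the minimum of |H_n^{(r)}(C)| over all semi-valid tuples C of length 2ℓ+3 in Ω_n. -/

import Mathlib

/-!
Listed in cyclic order as `q_0, …, q_{2ℓ}`, the points of a semi-valid tuple give the intervals
`[w_i, w_{i-1}]` as the arcs `[q_j, q_{j+ℓ}]`, so `HnC` depends only on the point set. Every tuple of
length `2ℓ + 3` contains one of length `2ℓ + 1` whose family is strictly smaller, and applying this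
to a minimiser proves the theorem.

Let `q_0, …, q_{2ℓ+2}` be the points of the long tuple. Some choice of starting point makes the arc
`[q_0, q_{ℓ+1}]` longer than `[q_{ℓ+2}, q_{2ℓ+2}]` (`Lift.exists_unbalanced`), since the first
consists of `ℓ + 1` gaps and the second of only `ℓ`. Remove `q_0` and `q_{ℓ+1}`. The two families
of arcs then differ only in this: the condition of meeting `[q_0, q_{ℓ+1}]` is dropped and the
condition of meeting `[q_{ℓ+2}, q_{2ℓ+2}]` is added (it implied the two other conditions that
disappear). The sets gained by the removal therefore avoid the longer of these two arcs, and the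
sets lost are those that meet every old arc but avoid the shorter one. A reflection
taking the shorter arc into the longer one injects gained sets into lost sets. It misses a lost set,
because the arcs have different lengths, `r ≥ 3`, and `n` is large enough for an `r`-set to avoid
the shorter arc (`card_lt_of_reflection`, `fam_skip_card_lt`).

To avoid case distinctions on wrap-around, tuples are lifted to periodic increasing maps `ℤ → ℤ`
(`Lift`), and the circle may be cut open at any place (`fam_card_eq`).
-/

open Finset

/-- An abstract convex geometric hypergraph: `m` vertices on a circle, with the
cyclic ordering `0 < 1 < ⋯ < m-1 < 0`, together with a family of edges. -/
structure CGH where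
  m : ℕ
  edges : Finset (Finset (Fin m))

/-- A list of points of `Fin n` is in (strict) cyclic order if some rotation of it
is strictly increasing in the linear order of `Fin n`. -/
def CyclicSorted {n : ℕ} (l : List (Fin n)) : Prop :=
  ∃ k : ℕ, (l.rotate k).Chain' (· < ·)

/-- `H` contains a subhypergraph isomorphic to the convex geometric hypergraph `F`:
there is an injection of the vertices of `F` into `Fin n` respecting the cyclic
orderings and sending every edge of `F` to an edge of `H`. -/
def HasCopy (F : CGH) {n : ℕ} (H : Finset (Finset (Fin n))) : Prop :=
  ∃ f : Fin F.m → Fin n, Function.Injective f ∧ CyclicSorted (List.ofFn f) ∧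
    ∀ e ∈ F.edges, e.image f ∈ H

/-- `H` is an `F`-saturated `r`-uniform convex geometric hypergraph on `Fin n`. -/
def IsSat (F : CGH) (r : ℕ) {n : ℕ} (H : Finset (Finset (Fin n))) : Prop :=
  (∀ h ∈ H, h.card = r) ∧ ¬ HasCopy F H ∧
    ∀ e : Finset (Fin n), e.card = r → e ∉ H → HasCopy F (insert e H)

/-- The saturation number `sat_○(n, F)` for `r`-uniform cgh's on `Fin n`. -/
noncomputable def satNum (F : CGH) (r n : ℕ) : ℕ :=
  sInf {k | ∃ H : Finset (Finset (Fin n)), IsSat F r H ∧ H.card = k}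

/-- `M_1^{(r)}`: two geometrically disjoint `r`-tuples. -/
def M1r (r : ℕ) : CGH where
  m := 2 * r
  edges := {Finset.univ.filter (fun i : Fin (2 * r) => (i : ℕ) < r),
            Finset.univ.filter (fun i : Fin (2 * r) => r ≤ (i : ℕ))}

def M1cgh : CGH := ⟨6, {({0, 1, 2} : Finset (Fin 6)), ({3, 4, 5} : Finset (Fin 6))}⟩
def M2cgh : CGH := ⟨6, {({0, 1, 3} : Finset (Fin 6)), ({2, 4, 5} : Finset (Fin 6))}⟩
def M3cgh : CGH := ⟨6, {({0, 2, 4} : Finset (Fin 6)), ({1, 3, 5} : Finset (Fin 6))}⟩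
def S1cgh : CGH := ⟨5, {({0, 1, 4} : Finset (Fin 5)), ({0, 2, 3} : Finset (Fin 5))}⟩
def S2cgh : CGH := ⟨5, {({0, 1, 2} : Finset (Fin 5)), ({0, 3, 4} : Finset (Fin 5))}⟩
def S3cgh : CGH := ⟨5, {({0, 1, 3} : Finset (Fin 5)), ({0, 2, 4} : Finset (Fin 5))}⟩
def D1cgh : CGH := ⟨4, {({0, 1, 2} : Finset (Fin 4)), ({0, 2, 3} : Finset (Fin 4))}⟩
def D2cgh : CGH := ⟨4, {({0, 1, 2} : Finset (Fin 4)), ({0, 1, 3} : Finset (Fin 4))}⟩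

/-- The closed clockwise arc `[a, b]` in `Fin n`. -/
def arcCC {n : ℕ} (a b : Fin n) : Finset (Fin n) :=
  if a ≤ b then Finset.univ.filter (fun x => a ≤ x ∧ x ≤ b)
  else Finset.univ.filter (fun x => a ≤ x ∨ x ≤ b)

/-- The open clockwise arc `(a, b)` in `Fin n`. -/
def arcOO {n : ℕ} (a b : Fin n) : Finset (Fin n) :=
  if a < b then Finset.univ.filter (fun x => a < x ∧ x < b)
  else Finset.univ.filter (fun x => a < x ∨ x < b)

/-- The tuple `(w_1, …, w_{2ℓ+1})` (`0`-indexed here) consists of distinct points with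
`w_1 < w_3 < ⋯ < w_{2ℓ+1} < w_2 < w_4 < ⋯ < w_{2ℓ} < w_1` in the cyclic order. -/
def SemiValid {n : ℕ} (ℓ : ℕ) (w : Fin (2 * ℓ + 1) → Fin n) : Prop :=
  Function.Injective w ∧
    CyclicSorted (List.ofFn fun p : Fin (2 * ℓ + 1) =>
      w ⟨(2 * (p : ℕ)) % (2 * ℓ + 1), Nat.mod_lt _ (by omega)⟩)

/-- A semi-valid tuple is `r`-valid if moreover `|[w_i, w_{i-1}]| ≥ r` for all `i`. -/
def RValid {n : ℕ} (r ℓ : ℕ) (w : Fin (2 * ℓ + 1) → Fin n) : Prop :=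
  SemiValid ℓ w ∧ ∀ i : Fin (2 * ℓ + 1), r ≤ (arcCC (w i) (w (i - 1))).card

/-- `H_n^{(r)}(C)`: all `r`-sets meeting every interval `[w_i, w_{i-1}]`. -/
def HnC {n : ℕ} (r ℓ : ℕ) (w : Fin (2 * ℓ + 1) → Fin n) : Finset (Finset (Fin n)) :=
  (Finset.powersetCard r Finset.univ).filter fun e =>
    ∀ i : Fin (2 * ℓ + 1), (e ∩ arcCC (w i) (w (i - 1))).Nonempty

/-- `j` is the vertex `λ(v)` for `v` in `H`. -/
def IsLam {n : ℕ} [NeZero n] (H : Finset (Finset (Fin n))) (v j : Fin n) : Prop :=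
  (∃ h ∈ H, v ∈ h ∧ h ⊆ arcCC j v) ∧ ¬ ∃ h ∈ H, v ∈ h ∧ h ⊆ arcCC (j + 1) v

/-- `j` is the vertex `ρ(v)` for `v` in `H`. -/
def IsRho {n : ℕ} [NeZero n] (H : Finset (Finset (Fin n))) (v j : Fin n) : Prop :=
  (∃ h ∈ H, v ∈ h ∧ h ⊆ arcCC v j) ∧ ¬ ∃ h ∈ H, v ∈ h ∧ h ⊆ arcCC v (j - 1)

noncomputable def lamF {n : ℕ} [NeZero n] (H : Finset (Finset (Fin n))) (v : Fin n) : Fin n :=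
  letI := Classical.propDecidable (∃ j, IsLam H v j)
  if h : ∃ j, IsLam H v j then h.choose else v

noncomputable def rhoF {n : ℕ} [NeZero n] (H : Finset (Finset (Fin n))) (v : Fin n) : Fin n :=
  letI := Classical.propDecidable (∃ j, IsRho H v j)
  if h : ∃ j, IsRho H v j then h.choose else v

/-- Strict cyclic betweenness on `Fin n`. -/
def CyclicSbtw {n : ℕ} (a b c : Fin n) : Prop :=
  (a < b ∧ b < c) ∨ (b < c ∧ c < a) ∨ (c < a ∧ a < b)

/-- Isomorphism of two cgh's on `Fin n`: a bijection of the vertex set respecting the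
cyclic order and inducing a bijection of the edge sets. -/
def CGHIso {n : ℕ} (H H' : Finset (Finset (Fin n))) : Prop :=
  ∃ g : Fin n ≃ Fin n,
    (∀ a b c : Fin n, CyclicSbtw a b c → CyclicSbtw (g a) (g b) (g c)) ∧
    ∀ e : Finset (Fin n), e ∈ H ↔ e.image g ∈ H'

/-- The 3-cgh `H_n^{(3)}`: all triples containing `v_0`, together with all triples
containing one of the pairs `{v_1, v_{n-2}}`, `{v_1, v_{n-1}}`, `{v_2, v_{n-1}}`. -/
def Hn3 (n : ℕ) (hn : 6 ≤ n) : Finset (Finset (Fin n)) :=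
  (Finset.powersetCard 3 Finset.univ).filter fun e =>
    (⟨0, by omega⟩ : Fin n) ∈ e ∨
    ((⟨1, by omega⟩ : Fin n) ∈ e ∧ (⟨n - 2, by omega⟩ : Fin n) ∈ e) ∨
    ((⟨1, by omega⟩ : Fin n) ∈ e ∧ (⟨n - 1, by omega⟩ : Fin n) ∈ e) ∨
    ((⟨2, by omega⟩ : Fin n) ∈ e ∧ (⟨n - 1, by omega⟩ : Fin n) ∈ e)

/-- Saturation with respect to a family of cgh's. -/
def FamSat (ℱ : Set CGH) (r : ℕ) {n : ℕ} (H : Finset (Finset (Fin n))) : Prop :=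
  (∀ h ∈ H, h.card = r) ∧ (∀ F ∈ ℱ, ¬ HasCopy F H) ∧
    ∀ e : Finset (Fin n), e.card = r → e ∉ H → ∃ F ∈ ℱ, HasCopy F (insert e H)

noncomputable def famSatNum (ℱ : Set CGH) (r n : ℕ) : ℕ :=
  sInf {k | ∃ H : Finset (Finset (Fin n)), FamSat ℱ r H ∧ H.card = k}

/-- Rotation of a point of `Fin n` by an integer amount `m`. -/
def finShift {n : ℕ} (hn : 0 < n) (v : Fin n) (m : ℤ) : Fin n :=
  ⟨(((v : ℤ) + m) % (n : ℤ)).toNat, by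
    have h0 : (0 : ℤ) < (n : ℤ) := by exact_mod_cast hn
    have h1 := Int.emod_nonneg ((v : ℤ) + m) (by omega : (n : ℤ) ≠ 0)
    have h2 := Int.emod_lt_of_pos ((v : ℤ) + m) h0
    omega⟩

/-- The tuple `w` is `(i,k)`-consecutive: starting from position `i`, the entries at
positions `i, i+2, …, i+2(k-1)` are `k` consecutive points `v_j, v_{j+1}, …, v_{j+k-1}`. -/
def ConsecAt {n ℓ : ℕ} (hn : 0 < n) (w : Fin (2 * ℓ + 1) → Fin n)
    (i : Fin (2 * ℓ + 1)) (k : ℕ) : Prop :=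
  ∃ j : Fin n, ∀ s : ℕ, s < k →
    w (i + ⟨(2 * s) % (2 * ℓ + 1), Nat.mod_lt _ (by omega)⟩) = finShift hn j s

/-- The tuple `C_{i,k,m}`: the `k` consecutive points at positions `i, i+2, …, i+2(k-1)`
are rotated by `m` units; all other entries are unchanged. -/
def shiftTuple {n ℓ : ℕ} (hn : 0 < n) (w : Fin (2 * ℓ + 1) → Fin n)
    (i : Fin (2 * ℓ + 1)) (k : ℕ) (m : ℤ) : Fin (2 * ℓ + 1) → Fin n :=
  fun p => if (p - i).val % 2 = 0 ∧ (p - i).val / 2 < k then finShift hn (w p) m else w p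


/-! ### Periodic lifts of tuples -/

/-- A lift to the line of `m` points on the circle `ℤ / n`: a strictly increasing map advancing
by `n` every `m` steps. The index `j` runs through the points in their cyclic order, so it does not
follow the labelling `w_1, w_2, …` of a semi-valid tuple, which advances by half a turn. -/
structure Lift (n m : ℕ) (q : ℤ → ℤ) : Prop where
  mono : StrictMono q
  per : ∀ j, q (j + m) = q j + n

/-- Some element of `e` is congruent modulo `n` to a point of the interval `[A, B]`. -/
def Hit (n : ℕ) (e : Finset ℤ) (A B : ℤ) : Prop :=
  ∃ x ∈ e, ∃ k : ℤ, A ≤ x + n * k ∧ x + n * k ≤ B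

open Classical in
/-- The analogue of `HnC` for a lift `q`, with the circle represented by the window `[c, c + n)`:
the `r`-subsets of the window meeting every arc `[q j, q (j + ℓ)]`. When `q` has `2 * ℓ + 1` points
per turn, these arcs are the intervals `[w_i, w_{i-1}]`. -/
noncomputable def Fam (n r ℓ : ℕ) (q : ℤ → ℤ) (c : ℤ) : Finset (Finset ℤ) :=
  ((Finset.Ico c (c + n)).powersetCard r).filter fun e => ∀ j : ℤ, Hit n e (q j) (q (j + ℓ))

lemma Lift.per_mul {n m : ℕ} {q : ℤ → ℤ} (h : Lift n m q) (j k : ℤ) :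
    q (j + m * k) = q j + n * k := by
  induction k using Int.induction_on with
  | zero => simp
  | succ k ih =>
    have := h.per (j + m * k)
    rw [ih] at this
    rw [mul_add, ← add_assoc, mul_one, this]; ring
  | pred k ih =>
    have := h.per (j + m * (-(k : ℤ) - 1))
    rw [show j + (m : ℤ) * (-(k : ℤ) - 1) + m = j + m * (-(k : ℤ)) by ring, ih] at this
    linear_combination -this

lemma Lift.reindex {n m : ℕ} {q : ℤ → ℤ} (h : Lift n m q) (a : ℤ) :
    Lift n m fun j => q (j + a) where
  mono := fun x y hxy => h.mono (by linarith)
  per := fun j => by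
    rw [← h.per]; congr 1; ring

/-- There is a first nonnegative point; indexing from it puts one full turn in `[0, n)`. -/
lemma Lift.exists_nonneg {n m : ℕ} {q : ℤ → ℤ} (h : Lift n m q) :
    ∃ a, q (a - 1) < 0 ∧ 0 ≤ q a := by
  have key : ∀ a b, a ≤ b → q a + (b - a) ≤ q b := by
    intro a b hab
    induction b, hab using Int.leInduction with
    | base => simp
    | succ b _ ih => have := h.mono (show b < b + 1 by omega); omega
  obtain ⟨a, h1, h2⟩ := Int.exists_least_of_bdd (P := fun z => 0 ≤ q z)
    ⟨-|q 0|, fun z hz => by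
      by_contra hlt
      have h1 := key z 0 (by have := abs_nonneg (q 0); omega)
      have h2 := le_abs_self (q 0)
      omega⟩
    ⟨|q 0|, by
      have h1 := key 0 |q 0| (abs_nonneg _)
      have h2 := neg_abs_le (q 0)
      omega⟩
  refine ⟨a, ?_, h1⟩
  by_contra hc
  have := h2 (a - 1) (by omega)
  omega

lemma fam_reindex (n r ℓ : ℕ) (q : ℤ → ℤ) (a c : ℤ) :
    Fam n r ℓ (fun j => q (j + a)) c = Fam n r ℓ q c := by
  ext e
  simp only [Fam, Finset.mem_filter, and_congr_right_iff]
  intro _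
  constructor
  · intro H j
    have := H (j - a)
    rwa [show j - a + a = j by ring, show j - a + ℓ + a = j + ℓ by ring] at this
  · intro H j
    have := H (j + a)
    rwa [show j + a + ℓ = j + ℓ + a by ring] at this

/-- Cutting the circle open elsewhere does not change the size of the family. Only `≤` is shown
here, by reducing every element modulo `n` into the new window. -/
lemma fam_card_le (n r ℓ : ℕ) (hn : 0 < n) (q : ℤ → ℤ) (c c' : ℤ) :
    (Fam n r ℓ q c).card ≤ (Fam n r ℓ q c').card := by
  set φ : ℤ → ℤ := fun x => c' + (x - c') % n with hφ
  have hn' : (0 : ℤ) < n := by exact_mod_cast hn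
  have hinj : ∀ x ∈ Finset.Ico c (c + n), ∀ y ∈ Finset.Ico c (c + n), φ x = φ y → x = y := by
    intro x hx y hy hxy
    rw [Finset.mem_Ico] at hx hy
    have h1 : (x - c') % n = (y - c') % n := by simpa [hφ] using hxy
    have h2 : (n : ℤ) ∣ x - y := by
      have h3 := Int.emod_eq_emod_iff_emod_sub_eq_zero.1 h1
      rw [show x - c' - (y - c') = x - y by ring] at h3
      exact Int.dvd_of_emod_eq_zero h3
    have h4 := Int.eq_zero_of_abs_lt_dvd h2 (by rw [abs_lt]; constructor <;> linarith)
    linarith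
  have hshift : ∀ x, ∃ k : ℤ, x = φ x + n * k := fun x =>
    ⟨(x - c') / n, by have := Int.emod_add_mul_ediv (x - c') n; simp only [hφ]; linarith⟩
  refine Finset.card_le_card_of_injOn (fun e => e.image φ) ?_ ?_
  · intro e he
    simp only [Fam, Finset.mem_coe, Finset.mem_filter, Finset.mem_powersetCard] at he ⊢
    obtain ⟨⟨hs, hc⟩, hh⟩ := he
    refine ⟨⟨?_, ?_⟩, ?_⟩
    · intro y hy
      obtain ⟨x, _, rfl⟩ := Finset.mem_image.1 hy
      have h1 := Int.emod_nonneg (x - c') hn'.ne'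
      have h2 := Int.emod_lt_of_pos (x - c') hn'
      simp only [hφ, Finset.mem_Ico]
      constructor <;> linarith
    · rw [Finset.card_image_of_injOn, hc]
      intro x hx y hy
      exact hinj x (hs hx) y (hs hy)
    · intro j
      obtain ⟨x, hx, k, h1, h2⟩ := hh j
      obtain ⟨k', hk'⟩ := hshift x
      refine ⟨φ x, Finset.mem_image_of_mem _ hx, k' + k, ?_, ?_⟩ <;> rw [mul_add] <;> linarith
  · intro e he e' he' hee
    simp only [Fam, Finset.mem_coe, Finset.mem_filter, Finset.mem_powersetCard] at he he'
    have hs := he.1.1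
    have hs' := he'.1.1
    have hee : e.image φ = e'.image φ := hee
    ext x
    constructor
    · intro hx
      have h1 : φ x ∈ e'.image φ := hee ▸ Finset.mem_image_of_mem _ hx
      obtain ⟨y, hy, hxy⟩ := Finset.mem_image.1 h1
      rwa [← hinj y (hs' hy) x (hs hx) hxy]
    · intro hx
      have h1 : φ x ∈ e.image φ := hee ▸ Finset.mem_image_of_mem _ hx
      obtain ⟨y, hy, hxy⟩ := Finset.mem_image.1 h1
      rwa [← hinj y (hs hy) x (hs' hx) hxy]

lemma fam_card_eq (n r ℓ : ℕ) (hn : 0 < n) (q : ℤ → ℤ) (c c' : ℤ) :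
    (Fam n r ℓ q c).card = (Fam n r ℓ q c').card :=
  le_antisymm (fam_card_le n r ℓ hn q c c') (fam_card_le n r ℓ hn q c' c)

/-! ### Semi-valid tuples and lifts -/

/-- The arc from `a` to `b` in terms of representatives `A ≤ B < A + n` of its end points. -/
lemma mem_arcCC_iff {n : ℕ} (a b x : Fin n) (A B s t : ℤ) (hA : A = a + n * s)
    (hB : B = b + n * t) (hAB : A ≤ B) (hBA : B < A + n) :
    x ∈ arcCC a b ↔ ∃ k : ℤ, A ≤ (x : ℤ) + n * k ∧ (x : ℤ) + n * k ≤ B := by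
  have ha : (a : ℤ) < n := by exact_mod_cast a.2
  have hb : (b : ℤ) < n := by exact_mod_cast b.2
  have hx : (x : ℤ) < n := by exact_mod_cast x.2
  have ha0 : (0 : ℤ) ≤ a := by positivity
  have hb0 : (0 : ℤ) ≤ b := by positivity
  have hx0 : (0 : ℤ) ≤ x := by positivity
  have hn : (0 : ℤ) < n := by linarith
  subst hA hB
  have h1 : -1 < t - s :=
    lt_of_mul_lt_mul_left (a := (n : ℤ)) (by linarith) hn.le
  have h2 : t - s < 2 :=
    lt_of_mul_lt_mul_left (a := (n : ℤ)) (by linarith) hn.le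
  unfold arcCC
  simp only [Fin.le_def]
  -- `t = s` is the arc that does not pass `0`, `t = s + 1` the one that does
  have hcase : t = s ∨ t = s + 1 := by omega
  rcases hcase with rfl | rfl
  · rw [if_pos (by zify; linarith)]
    simp only [Finset.mem_filter, Finset.mem_univ, true_and]
    constructor
    · rintro ⟨h, h'⟩
      exact ⟨t, by zify at h h'; constructor <;> linarith⟩
    · rintro ⟨k, h, h'⟩
      have hk : k = t := by
        have e1 : k - t < 1 :=
          lt_of_mul_lt_mul_left (a := (n : ℤ)) (by linarith) hn.le
        have e2 : -1 < k - t :=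
          lt_of_mul_lt_mul_left (a := (n : ℤ)) (by linarith) hn.le
        omega
      subst hk
      zify
      constructor <;> linarith
  · rw [if_neg (by zify; nlinarith)]
    simp only [Finset.mem_filter, Finset.mem_univ, true_and]
    constructor
    · rintro (h | h)
      · exact ⟨s, by zify at h; constructor <;> nlinarith⟩
      · exact ⟨s + 1, by zify at h; constructor <;> nlinarith⟩
    · rintro ⟨k, h, h'⟩
      have hk : k = s ∨ k = s + 1 := by
        have e1 : k - s < 2 :=
          lt_of_mul_lt_mul_left (a := (n : ℤ)) (by linarith) hn.le
        have e2 : -1 < k - s :=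
          lt_of_mul_lt_mul_left (a := (n : ℤ)) (by linarith) hn.le
        omega
      rcases hk with rfl | rfl
      · left; zify; linarith
      · right; zify; linarith

/-- The position in the tuple `w` of the `j`-th point in cyclic order, namely `2 j` modulo
`2 ℓ + 1`. -/
def idx (ℓ : ℕ) (j : ℤ) : Fin (2 * ℓ + 1) :=
  ⟨(2 * j % (2 * ℓ + 1 : ℕ)).toNat, by
    have h1 := Int.emod_nonneg (2 * j) (show ((2 * ℓ + 1 : ℕ) : ℤ) ≠ 0 by omega)
    have h2 := Int.emod_lt_of_pos (2 * j) (show (0 : ℤ) < (2 * ℓ + 1 : ℕ) by omega)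
    omega⟩

lemma idx_val (ℓ : ℕ) (j : ℤ) : ((idx ℓ j : ℕ) : ℤ) = 2 * j % (2 * ℓ + 1 : ℕ) :=
  Int.toNat_of_nonneg (Int.emod_nonneg (2 * j) (show ((2 * ℓ + 1 : ℕ) : ℤ) ≠ 0 by omega))

lemma idx_eq_of_dvd (ℓ : ℕ) {j j' : ℤ} (h : ((2 * ℓ + 1 : ℕ) : ℤ) ∣ j - j') :
    idx ℓ j = idx ℓ j' := by
  apply Fin.ext
  zify
  rw [idx_val, idx_val]
  apply Int.emod_eq_emod_iff_emod_sub_eq_zero.2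
  apply Int.emod_eq_zero_of_dvd
  rw [← mul_sub]
  exact Dvd.dvd.mul_left h 2

/-- Multiplication by `ℓ + 1`, the inverse of `2` modulo `2 ℓ + 1`, inverts `idx`. -/
lemma idx_mul (ℓ : ℕ) (i : Fin (2 * ℓ + 1)) : idx ℓ ((i : ℕ) * (ℓ + 1)) = i := by
  apply Fin.ext
  zify
  rw [idx_val]
  have : (2 : ℤ) * ((i : ℕ) * (ℓ + 1)) = (i : ℕ) + (2 * ℓ + 1 : ℕ) * (i : ℕ) := by
    push_cast; ring
  rw [this, Int.add_mul_emod_self_left]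
  exact Int.emod_eq_of_lt (by positivity) (by exact_mod_cast i.2)

/-- Since `2 ℓ ≡ -1` modulo `2 ℓ + 1`, the interval `[w_i, w_{i-1}]` spans `ℓ` cyclic steps. -/
lemma idx_add (ℓ : ℕ) (hℓ : 1 ≤ ℓ) (j : ℤ) : idx ℓ (j + ℓ) = idx ℓ j - 1 := by
  apply Fin.ext
  have h1 : ((1 : Fin (2 * ℓ + 1)) : ℕ) = 1 := by
    rw [Fin.val_one', Nat.mod_eq_of_lt (by omega)]
  rw [Fin.val_sub, h1]
  zify
  rw [idx_val]
  push_cast [Nat.cast_sub (show 1 ≤ 2 * ℓ + 1 by omega)]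
  rw [idx_val]
  push_cast
  rw [Int.add_emod_emod]
  congr 1
  ring

/-- If `q` lifts the tuple `w` listed in cyclic order, then `HnC` and `Fam` are the same family up
to the identification of `Fin n` with `[0, n)`. -/
lemma hnC_card (n r ℓ : ℕ) (hℓ : 1 ≤ ℓ) (w : Fin (2 * ℓ + 1) → Fin n) (q : ℤ → ℤ)
    (hq : Lift n (2 * ℓ + 1) q) (hw : ∀ j, ∃ k : ℤ, q j = w (idx ℓ j) + n * k) :
    (HnC r ℓ w).card = (Fam n r ℓ q 0).card := by
  have key : ∀ e : Finset (Fin n), (∀ i, (e ∩ arcCC (w i) (w (i - 1))).Nonempty) ↔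
      ∀ j, Hit n (e.image fun x : Fin n => (x : ℤ)) (q j) (q (j + ℓ)) := by
    intro e
    have key2 : ∀ j, (e ∩ arcCC (w (idx ℓ j)) (w (idx ℓ j - 1))).Nonempty ↔
        Hit n (e.image fun x : Fin n => (x : ℤ)) (q j) (q (j + ℓ)) := by
      intro j
      rw [← idx_add ℓ hℓ]
      obtain ⟨s, hs⟩ := hw j
      obtain ⟨t, ht⟩ := hw (j + ℓ)
      have h1 : q j ≤ q (j + ℓ) := hq.mono.monotone (by omega)
      have h2 : q (j + ℓ) < q j + n := by
        rw [← hq.per]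
        exact hq.mono (by push_cast; omega)
      simp only [Finset.Nonempty, Finset.mem_inter,
        mem_arcCC_iff _ _ _ _ _ s t hs ht h1 h2, Hit, Finset.exists_mem_image]
    constructor
    · intro h j
      exact (key2 j).1 (h _)
    · intro h i
      have := (key2 _).2 (h ((i : ℕ) * (ℓ + 1)))
      rwa [idx_mul] at this
  have hinj : Function.Injective fun x : Fin n => (x : ℤ) := by
    intro x y hxy
    apply Fin.ext
    simpa using hxy
  refine Finset.card_bij (fun e _ => e.image fun x : Fin n => (x : ℤ)) ?_ ?_ ?_
  · intro e he
    simp only [HnC, Finset.mem_filter, Finset.mem_powersetCard] at he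
    simp only [Fam, Finset.mem_filter, Finset.mem_powersetCard]
    refine ⟨⟨?_, ?_⟩, (key e).1 he.2⟩
    · intro y hy
      obtain ⟨x, _, rfl⟩ := Finset.mem_image.1 hy
      simp
    · rw [Finset.card_image_of_injective _ hinj, he.1.2]
  · intro e _ e' _ h
    exact Finset.image_injective hinj h
  · intro E hE
    simp only [Fam, Finset.mem_filter, Finset.mem_powersetCard] at hE
    have him : (Finset.univ.filter fun x : Fin n => (x : ℤ) ∈ E).image
        (fun x : Fin n => (x : ℤ)) = E := by
      ext y
      simp only [Finset.mem_image, Finset.mem_filter, Finset.mem_univ, true_and]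
      constructor
      · rintro ⟨x, hx, rfl⟩; exact hx
      · intro hy
        have := hE.1.1 hy
        rw [Finset.mem_Ico] at this
        have hyy : ((y.toNat : ℕ) : ℤ) = y := Int.toNat_of_nonneg this.1
        exact ⟨⟨y.toNat, by omega⟩, by simpa [hyy] using hy, by simpa using this.1⟩
    refine ⟨Finset.univ.filter fun x : Fin n => (x : ℤ) ∈ E, ?_, him⟩
    simp only [HnC, Finset.mem_filter, Finset.mem_powersetCard]
    refine ⟨⟨Finset.subset_univ _, ?_⟩, (key _).2 ?_⟩
    · rw [← hE.1.2]
      conv_rhs => rw [← him]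
      rw [Finset.card_image_of_injective _ hinj]
    · rw [him]; exact hE.2

lemma semiValid_lift (n r ℓ : ℕ) (hℓ : 1 ≤ ℓ) (w : Fin (2 * ℓ + 1) → Fin n)
    (hw : SemiValid ℓ w) :
    ∃ q, Lift n (2 * ℓ + 1) q ∧ (HnC r ℓ w).card = (Fam n r ℓ q 0).card := by
  obtain ⟨_, k, hk⟩ := hw
  have hidx : ∀ s : ℕ, 
      (⟨2 * (s % (2 * ℓ + 1)) % (2 * ℓ + 1), Nat.mod_lt _ (by omega)⟩ : Fin (2 * ℓ + 1)) = idx ℓ s := by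
    intro s
    apply Fin.ext
    zify
    rw [idx_val]
    push_cast
    rw [Int.mul_emod, Int.emod_emod, ← Int.mul_emod]
  -- the rotation by `k` lists the points in increasing order
  have hlt : ∀ s : ℕ, s + 1 < 2 * ℓ + 1 → w (idx ℓ (s + k)) < w (idx ℓ (s + 1 + k)) := by
    intro s hs
    have := List.isChain_iff_getElem.1 hk s (by
      simp only [List.length_rotate, List.length_ofFn]; exact hs)
    simp only [List.getElem_rotate, List.getElem_ofFn, List.length_ofFn] at this
    have e1 := hidx (s + k)
    have e2 := hidx (s + 1 + k)
    push_cast at e1 e2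
    rw [← e1, ← e2]
    exact this
  obtain ⟨m, hm⟩ : ∃ m : ℕ, m = 2 * ℓ + 1 := ⟨_, rfl⟩
  have hmpos : (0 : ℤ) < m := by omega
  have hL : Lift n (2 * ℓ + 1) fun j => w (idx ℓ j) + n * ((j - k) / m) := by
    rw [← hm]
    refine ⟨?_, ?_⟩
    · apply strictMono_int_of_lt_succ
      intro j
      have h0 := Int.emod_add_mul_ediv (j - k) m
      have h1 := Int.emod_nonneg (j - k) hmpos.ne'
      have h2 := Int.emod_lt_of_pos (j - k) hmpos
      obtain ⟨s, hs⟩ := Int.eq_ofNat_of_zero_le h1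
      set t := (j - k) / m with ht
      have e1 : idx ℓ j = idx ℓ (s + k) := idx_eq_of_dvd ℓ ⟨t, by rw [← hm]; omega⟩
      have e2 : idx ℓ (j + 1) = idx ℓ (s + 1 + k) := idx_eq_of_dvd ℓ ⟨t, by rw [← hm]; omega⟩
      by_cases hsm : s + 1 < m
      · have e3 : (j + 1 - k) / m = t := by
          rw [show j + 1 - k = (s + 1) + m * t by omega, Int.add_mul_ediv_left _ _ hmpos.ne',
            Int.ediv_eq_zero_of_lt (by omega) (by omega)]
          simp
        rw [e3, e1, e2]
        have := hlt s (hm ▸ hsm)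
        rw [Fin.lt_def] at this
        zify at this
        linarith
      · have e3 : (j + 1 - k) / m = t + 1 := by
          rw [show j + 1 - k = m * (t + 1) by rw [mul_add]; omega,
            Int.mul_ediv_cancel_left _ hmpos.ne']
        rw [e3]
        have h3 : ((w (idx ℓ j) : ℕ) : ℤ) < n := by exact_mod_cast (w (idx ℓ j)).2
        have h4 : (0 : ℤ) ≤ (w (idx ℓ (j + 1)) : ℕ) := by positivity
        rw [mul_add]
        linarith
    · intro j
      have e1 : idx ℓ (j + m) = idx ℓ j := idx_eq_of_dvd ℓ ⟨1, by rw [← hm]; ring⟩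
      have e2 : (j + m - k) / (m : ℤ) = (j - k) / m + 1 := by
        rw [show j + m - k = (j - k) + m * 1 by ring, Int.add_mul_ediv_left _ _ hmpos.ne']
      change ((w (idx ℓ (j + m)) : ℕ) : ℤ) + n * ((j + m - k) / m) = _
      rw [e1, e2]; ring
  exact ⟨_, hL, hnC_card n r ℓ hℓ w _ hL fun j => ⟨_, rfl⟩⟩

lemma lift_semiValid (n r ℓ : ℕ) (hℓ : 1 ≤ ℓ) (q : ℤ → ℤ) (hq : Lift n (2 * ℓ + 1) q) :
    ∃ w : Fin (2 * ℓ + 1) → Fin n, SemiValid ℓ w ∧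
      (HnC r ℓ w).card = (Fam n r ℓ q 0).card := by
  obtain ⟨a, ha1, ha2⟩ := hq.exists_nonneg
  rw [← fam_reindex n r ℓ q a]
  have hq' := hq.reindex a
  have h1 : (fun j => q (j + a)) (-1) < 0 := by simpa [add_comm, sub_eq_add_neg] using ha1
  have h2 : 0 ≤ (fun j => q (j + a)) 0 := by simpa using ha2
  generalize (fun j => q (j + a)) = p at hq' h1 h2
  clear ha1 ha2 hq q a
  set m : ℕ := 2 * ℓ + 1 with hm
  have hmpos : (0 : ℤ) < m := by omega
  have hpn : ∀ j : ℤ, j < m → p j < n := by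
    intro j hj
    have := hq'.per (-1)
    have h3 := hq'.mono.monotone (show j ≤ -1 + m by omega)
    omega
  have hp0 : ∀ j, 0 ≤ j → 0 ≤ p j := fun j hj => h2.trans (hq'.mono.monotone hj)
  set w : Fin m → Fin n := fun i => ⟨(p (((i : ℕ) * (ℓ + 1) : ℤ) % m)).toNat, by
    have h3 := hpn _ (Int.emod_lt_of_pos ((i : ℕ) * (ℓ + 1) : ℤ) hmpos)
    have h4 := hp0 _ (Int.emod_nonneg ((i : ℕ) * (ℓ + 1) : ℤ) hmpos.ne')
    omega⟩ with hwdef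
  have hwv : ∀ i, ((w i : ℕ) : ℤ) = p (((i : ℕ) * (ℓ + 1) : ℤ) % m) := fun i =>
    Int.toNat_of_nonneg (hp0 _ (Int.emod_nonneg _ hmpos.ne'))
  have hwi : ∀ j, ((w (idx ℓ j) : ℕ) : ℤ) = p (j % m) := by
    intro j
    rw [hwv, idx_val, ← hm]
    congr 1
    rw [Int.mul_emod, Int.emod_emod, ← Int.mul_emod]
    rw [show 2 * j * (ℓ + 1 : ℤ) = j + m * j by rw [hm]; push_cast; ring,
      Int.add_mul_emod_self_left]
  refine ⟨w, ⟨?_, 0, ?_⟩, ?_⟩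
  · intro i i' h
    have h3 : ((w i : ℕ) : ℤ) = (w i' : ℕ) := by rw [h]
    rw [hwv, hwv] at h3
    have h4 := hq'.mono.injective h3
    rw [← idx_mul ℓ i, ← idx_mul ℓ i']
    apply idx_eq_of_dvd
    exact Int.dvd_of_emod_eq_zero (Int.emod_eq_emod_iff_emod_sub_eq_zero.1 h4)
  · rw [List.rotate_zero]
    apply List.isChain_iff_getElem.2
    intro s hs
    simp only [List.length_ofFn] at hs
    have hidx : ∀ s : ℕ, ∀ h, (⟨2 * s % m, h⟩ : Fin (2 * ℓ + 1)) = idx ℓ s := by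
      intro s _
      apply Fin.ext
      zify
      rw [idx_val, ← hm]
    simp only [List.getElem_ofFn]
    rw [hidx, hidx, Fin.lt_def]
    zify
    rw [hwi, hwi]
    apply hq'.mono
    rw [Int.emod_eq_of_lt (by omega) (by omega), Int.emod_eq_of_lt (by omega) (by omega)]
    omega
  · apply hnC_card n r ℓ hℓ _ _ hq'
    intro j
    refine ⟨j / m, ?_⟩
    rw [hwi, ← hq'.per_mul, Int.emod_add_mul_ediv]

lemma exists_lift (n ℓ : ℕ) (hn : 2 * ℓ + 1 ≤ n) : ∃ q, Lift n (2 * ℓ + 1) q := by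
  set m : ℕ := 2 * ℓ + 1 with hm
  have hmpos : (0 : ℤ) < m := by omega
  have hmn : (m : ℤ) ≤ n := by exact_mod_cast hn
  have key : ∀ j : ℤ, j + (n - m : ℤ) * (j / m) = j % m + n * (j / m) := by
    intro j
    have := Int.emod_add_mul_ediv j m
    linear_combination -this
  refine ⟨fun j => j + (n - m) * (j / m), ?_, ?_⟩
  · intro x y hxy
    have := mul_le_mul_of_nonneg_left (Int.ediv_le_ediv hmpos hxy.le)
      (show (0 : ℤ) ≤ n - m by linarith)
    simp only
    linarith
  · intro j
    have : (j + m) / (m : ℤ) = j / m + 1 := by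
      rw [show j + (m : ℤ) = j + m * 1 by ring, Int.add_mul_ediv_left _ _ hmpos.ne']
    simp only [this]
    ring

/-! ### The reflection injection -/

/-- The combinatorial comparison, on a circle cut open at `b` (identified with `a3`) and carrying
the points `b < q0 < a1 < a2 < a3`. The sets in `H' \ H` avoid `[q0, a1]`, meet `[a2, a3]`, and
meet both of the arcs `[a1, a2]` and `[a3, q0]` in between; the `r`-sets that avoid `[a2, a3]`, meet
`[q0, a1]` and meet both arcs in between lie in `H \ H'`. The map sending `a3` to `q0`, reflecting
`[a2, a3)` into `(q0, a1]` and fixing all other points takes sets of the first kind injectively to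
sets of the second kind. As `[a2, a3]` is shorter than `[q0, a1]`, the point `a1 - (a3 - a2)` is not
a value of this map, so a set of the second kind through that point is missed. -/
lemma card_lt_of_reflection (r : ℕ) (hr : 3 ≤ r) (b q0 a1 a2 a3 : ℤ) (h01 : b < q0) (h12 : q0 < a1)
    (h23 : a1 < a2) (h34 : a2 < a3) (hXY : a3 - a2 < a1 - q0) (hrn : r ≤ a2 - b - 1)
    (H H' : Finset (Finset ℤ))
    (hL : ∀ e ∈ H', e ∉ H → e.card = r ∧ (∀ x ∈ e, b < x ∧ x ≤ a3) ∧
      (∀ x ∈ e, q0 ≤ x → a1 < x) ∧ (∃ x ∈ e, a1 ≤ x ∧ x ≤ a2) ∧ (∃ x ∈ e, x ≤ q0 ∨ x = a3) ∧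
      ∃ x ∈ e, a2 ≤ x)
    (hA : ∀ e : Finset ℤ, e.card = r → (∀ x ∈ e, b < x ∧ x < a2) → (∃ x ∈ e, x ≤ q0) →
      (∃ x ∈ e, a1 ≤ x) → (∃ x ∈ e, q0 ≤ x ∧ x ≤ a1) → e ∈ H ∧ e ∉ H') :
    H'.card < H.card := by
  set φ : ℤ → ℤ := fun x => if x = a3 then q0 else if a2 ≤ x then a1 + a2 - x else x with hφ
  have hinj : ∀ x y : ℤ, (b < x ∧ x ≤ a3) → (q0 ≤ x → a1 < x) → (b < y ∧ y ≤ a3) →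
      (q0 ≤ y → a1 < y) → φ x = φ y → x = y := by
    intro x y hx hx' hy hy' hxy
    simp only [hφ] at hxy
    split_ifs at hxy <;> omega
  -- a set of the second kind through the point `a1 - (a3 - a2)`
  obtain ⟨e0, he0, he0', hc0⟩ := Finset.exists_subsuperset_card_eq
    (s := {q0, a1, a1 - (a3 - a2)}) (t := Finset.Ioo b a2) (n := r)
    (by
      intro x hx
      simp only [Finset.mem_insert, Finset.mem_singleton] at hx
      rw [Finset.mem_Ioo]
      omega)
    (Finset.card_le_three.trans hr) (by rw [Int.card_Ioo]; omega)
  have he0m : e0 ∈ H \ H' := by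
    rw [Finset.mem_sdiff]
    exact hA e0 hc0 (fun x hx => Finset.mem_Ioo.1 (he0' hx)) ⟨q0, he0 (by simp), le_rfl⟩
      ⟨a1, he0 (by simp), le_rfl⟩ ⟨q0, he0 (by simp), le_rfl, h12.le⟩
  have hmain : (H' \ H).card ≤ ((H \ H').erase e0).card := by
    refine Finset.card_le_card_of_injOn (fun e => e.image φ) ?_ ?_
    · intro e he
      rw [Finset.mem_coe, Finset.mem_sdiff] at he
      obtain ⟨hc, hw, hmiss, ⟨u, hu, hu1, hu2⟩, ⟨v, hv, hv'⟩, z, hz, hz'⟩ := hL e he.1 he.2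
      rw [Finset.mem_coe, Finset.mem_erase, Finset.mem_sdiff]
      constructor
      · intro h
        have h1 : a1 - (a3 - a2) ∈ e.image φ := by
          simp only at h
          rw [h]; exact he0 (by simp)
        obtain ⟨x, hx, hxe⟩ := Finset.mem_image.1 h1
        have := hw x hx
        have := hmiss x hx
        simp only [hφ] at hxe
        split_ifs at hxe <;> omega
      · apply hA
        · rw [Finset.card_image_of_injOn, hc]
          intro x hx y hy
          exact hinj x y (hw x hx) (hmiss x hx) (hw y hy) (hmiss y hy)
        · intro y hy
          obtain ⟨x, hx, rfl⟩ := Finset.mem_image.1 hy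
          have := hw x hx
          simp only [hφ]
          split_ifs <;> omega
        · refine ⟨φ v, Finset.mem_image_of_mem _ hv, ?_⟩
          simp only [hφ]
          split_ifs <;> omega
        · refine ⟨φ u, Finset.mem_image_of_mem _ hu, ?_⟩
          simp only [hφ]
          split_ifs <;> omega
        · refine ⟨φ z, Finset.mem_image_of_mem _ hz, ?_⟩
          have := hw z hz
          simp only [hφ]
          split_ifs <;> omega
    · intro e he e' he' hee
      rw [Finset.mem_coe, Finset.mem_sdiff] at he he'
      obtain ⟨-, hs, hm, -⟩ := hL e he.1 he.2
      obtain ⟨-, hs', hm', -⟩ := hL e' he'.1 he'.2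
      have hee : e.image φ = e'.image φ := hee
      ext x
      constructor
      · intro hx
        have h1 : φ x ∈ e'.image φ := hee ▸ Finset.mem_image_of_mem _ hx
        obtain ⟨y, hy, hxy⟩ := Finset.mem_image.1 h1
        rwa [← hinj y x (hs' y hy) (hm' y hy) (hs x hx) (hm x hx) hxy]
      · intro hx
        have h1 : φ x ∈ e.image φ := hee ▸ Finset.mem_image_of_mem _ hx
        obtain ⟨y, hy, hxy⟩ := Finset.mem_image.1 h1
        rwa [← hinj y x (hs y hy) (hm y hy) (hs' x hx) (hm' x hx) hxy]
  rw [Finset.card_erase_of_mem he0m] at hmain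
  have hpos := Finset.card_pos.2 ⟨e0, he0m⟩
  have e1 := Finset.card_sdiff_add_card_inter H H'
  have e2 := Finset.card_sdiff_add_card_inter H' H
  rw [Finset.inter_comm] at e2
  omega

lemma Hit.mono {n : ℕ} {e : Finset ℤ} {A B A' B' : ℤ} (h : Hit n e A B) (hA : A' ≤ A)
    (hB : B ≤ B') : Hit n e A' B' := by
  obtain ⟨x, hx, k, h1, h2⟩ := h
  exact ⟨x, hx, k, hA.trans h1, h2.trans hB⟩

lemma Hit.shift {n : ℕ} {e : Finset ℤ} {A B : ℤ} (h : Hit n e A B) (s : ℤ) :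
    Hit n e (A + n * s) (B + n * s) := by
  obtain ⟨x, hx, k, h1, h2⟩ := h
  exact ⟨x, hx, k + s, by rw [mul_add]; linarith, by rw [mul_add]; linarith⟩

/-! ### Removing two points from a tuple -/

/-- Some point `q a` has its `ℓ + 1` following gaps longer in total than the `ℓ` gaps opposite to
them. Otherwise the lengths `X a` of the arcs of `ℓ + 1` gaps would satisfy `X a < X (a + ℓ + 2)`
for all `a`, contradicting their periodicity. -/
lemma Lift.exists_unbalanced {n ℓ : ℕ} {q : ℤ → ℤ} (hq : Lift n (2 * (ℓ + 1) + 1) q) :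
    ∃ a, q (a + (2 * ℓ + 2)) - q (a + (ℓ + 2)) < q (a + (ℓ + 1)) - q a := by
  by_contra! hc
  set X : ℤ → ℤ := fun a => q (a + (ℓ + 1)) - q a with hX
  have h1 : ∀ a, X a < X (a + (ℓ + 2)) := by
    intro a
    have h2 := hq.mono (show a + (2 * ℓ + 2) < a + (ℓ + 2) + (ℓ + 1) by omega)
    have h3 := hc a
    simp only [hX]
    linarith
  have h2 : StrictMono fun k : ℕ => X (k * (ℓ + 2)) := by
    apply strictMono_nat_of_lt_succ
    intro k
    have := h1 (k * (ℓ + 2))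
    push_cast
    rwa [add_mul, one_mul]
  have h3 := h2 (show 0 < 2 * (ℓ + 1) + 1 by omega)
  have h4 := hq.per_mul (0 + (ℓ + 1)) (ℓ + 2)
  have h5 := hq.per_mul 0 (ℓ + 2)
  simp only [hX] at h3
  rw [Nat.cast_zero, zero_mul, add_comm (((2 * (ℓ + 1) + 1 : ℕ) : ℤ) * (ℓ + 2)) (ℓ + 1 : ℤ)] at h3
  rw [zero_add] at h4 h5
  rw [h4, h5] at h3
  simp at h3

/-- The increasing enumeration of the integers that are not congruent to `0` or `ℓ + 1` modulo
`2 ℓ + 3`. Composing a lift of `2 ℓ + 3` points with it removes the points of index `0` and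
`ℓ + 1`. -/
def skipIdx (ℓ : ℕ) (t : ℤ) : ℤ :=
  (2 * ℓ + 3) * (t / (2 * ℓ + 1)) + (t % (2 * ℓ + 1)) + if t % (2 * ℓ + 1) < ℓ then 1 else 2

lemma skipIdx_eq (ℓ : ℕ) (k s : ℤ) (h0 : 0 ≤ s) (h1 : s < 2 * ℓ + 1) :
    skipIdx ℓ (s + (2 * ℓ + 1) * k) = (2 * ℓ + 3) * k + s + if s < ℓ then 1 else 2 := by
  unfold skipIdx
  rw [Int.add_mul_ediv_left _ _ (by omega), Int.add_mul_emod_self_left,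
    Int.ediv_eq_zero_of_lt h0 h1, Int.emod_eq_of_lt h0 h1, zero_add]

lemma skipIdx_strictMono (ℓ : ℕ) : StrictMono (skipIdx ℓ) := by
  apply strictMono_int_of_lt_succ
  intro t
  have h0 := Int.emod_add_mul_ediv t (2 * ℓ + 1)
  have h1 := Int.emod_nonneg t (show (2 * ℓ + 1 : ℤ) ≠ 0 by omega)
  have h2 := Int.emod_lt_of_pos t (show (0 : ℤ) < 2 * ℓ + 1 by omega)
  set s := t % (2 * ℓ + 1)
  set k := t / (2 * ℓ + 1)
  rw [← h0, skipIdx_eq ℓ k s h1 h2]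
  by_cases hs : s + 1 < 2 * ℓ + 1
  · rw [show s + (2 * ℓ + 1) * k + 1 = (s + 1) + (2 * ℓ + 1) * k by ring,
      skipIdx_eq ℓ k (s + 1) (by omega) hs]
    split_ifs <;> linarith
  · rw [show s + (2 * ℓ + 1) * k + 1 = 0 + (2 * ℓ + 1) * (k + 1) by
      rw [mul_add]; omega, skipIdx_eq ℓ (k + 1) 0 (by omega) (by omega)]
    have : s = 2 * ℓ := by omega
    rw [mul_add, this]
    split_ifs <;> omega

lemma Lift.skip {n ℓ : ℕ} {q : ℤ → ℤ} (hq : Lift n (2 * (ℓ + 1) + 1) q) :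
    Lift n (2 * ℓ + 1) fun t => q (skipIdx ℓ t) where
  mono := hq.mono.comp (skipIdx_strictMono ℓ)
  per := fun t => by
    have h : skipIdx ℓ (t + (2 * ℓ + 1 : ℕ)) = skipIdx ℓ t + (2 * (ℓ + 1) + 1 : ℕ) := by
      unfold skipIdx
      push_cast
      rw [Int.add_emod_right, Int.add_ediv_of_dvd_right (dvd_refl _),
        Int.ediv_self (by omega)]
      ring
    change q (skipIdx ℓ (t + (2 * ℓ + 1 : ℕ))) = _
    rw [h, hq.per]

/-- Removing the points `0` and `ℓ + 1` from a tuple of length `2 ℓ + 3` makes the family smaller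
when the arc `[q 0, q (ℓ + 1)]` is longer than the arc `[q (ℓ + 2), q (2 ℓ + 2)]`. Of the arcs of
the longer tuple only the one from `q 0`, the one to `q 0` and the one from `q (ℓ + 1)` lose
an end point; the last two contain the arc `[q (ℓ + 2), q (2 ℓ + 2)]` of the shorter tuple. -/
lemma fam_skip_card_lt (n r ℓ : ℕ) (hℓ : 1 ≤ ℓ) (hr : 3 ≤ r) (hn1 : 3 * r - 5 ≤ n)
    (hn2 : 2 * ℓ + 3 ≤ n) (q : ℤ → ℤ) (hq : Lift n (2 * (ℓ + 1) + 1) q)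
    (hXY : q (2 * ℓ + 2) - q (ℓ + 2) < q (ℓ + 1) - q 0) :
    (Fam n r ℓ (fun t => q (skipIdx ℓ t)) (q (-1) + 1)).card <
      (Fam n r (ℓ + 1) q (q (-1) + 1)).card := by
  have hper : ∀ j, q (j + (2 * ℓ + 3)) = q j + n := by
    intro j; rw [← hq.per]; congr 1
  have ha3 : q (2 * ℓ + 2) = q (-1) + n := by rw [← hper]; congr 1; ring
  have m1 := hq.mono (show (-1 : ℤ) < 0 by omega)
  have m2 := hq.mono (show (0 : ℤ) < ℓ + 1 by omega)
  have m3 := hq.mono (show (ℓ + 1 : ℤ) < ℓ + 2 by omega)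
  have m4 := hq.mono (show (ℓ + 2 : ℤ) < 2 * ℓ + 2 by omega)
  -- the arcs of the thinned tuple
  have arc1 : ∀ j : ℤ, 1 ≤ j → j ≤ ℓ → skipIdx ℓ (j - 1) = j ∧ skipIdx ℓ (j - 1 + ℓ) = j + ℓ + 1 := by
    intro j h1 h2
    have e1 := skipIdx_eq ℓ 0 (j - 1) (by omega) (by omega)
    have e2 := skipIdx_eq ℓ 0 (j - 1 + ℓ) (by omega) (by omega)
    rw [mul_zero, add_zero] at e1 e2
    rw [e1, e2]
    split_ifs <;> omega
  have arc2 : skipIdx ℓ ℓ = ℓ + 2 ∧ skipIdx ℓ (ℓ + ℓ) = 2 * ℓ + 2 := by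
    have e1 := skipIdx_eq ℓ 0 ℓ (by omega) (by omega)
    have e2 := skipIdx_eq ℓ 0 (ℓ + ℓ) (by omega) (by omega)
    rw [mul_zero, add_zero] at e1 e2
    rw [e1, e2]
    split_ifs <;> omega
  have arc3 : ∀ j : ℤ, ℓ + 3 ≤ j → j ≤ 2 * ℓ + 2 →
      skipIdx ℓ (j - 2) = j ∧ skipIdx ℓ (j - 2 + ℓ) = j + ℓ + 1 := by
    intro j h1 h2
    have e1 := skipIdx_eq ℓ 0 (j - 2) (by omega) (by omega)
    have e2 := skipIdx_eq ℓ 1 (j - 3 - ℓ) (by omega) (by omega)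
    rw [show j - 3 - ℓ + (2 * ℓ + 1) * 1 = j - 2 + ℓ by ring] at e2
    rw [mul_zero, add_zero] at e1
    rw [e1, e2]
    split_ifs <;> omega
  apply card_lt_of_reflection r hr (q (-1)) (q 0) (q (ℓ + 1)) (q (ℓ + 2)) (q (2 * ℓ + 2))
    m1 m2 m3 m4 hXY (by omega)
  · intro e he heH
    simp only [Fam, Finset.mem_filter, Finset.mem_powersetCard] at he heH
    obtain ⟨⟨hs, hc⟩, hh⟩ := he
    have hw : ∀ x ∈ e, q (-1) < x ∧ x ≤ q (2 * ℓ + 2) := by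
      intro x hx
      have := Finset.mem_Ico.1 (hs hx)
      omega
    have hlin : ∀ A B, q (-1) < A → B ≤ q (2 * ℓ + 2) → Hit n e A B →
        ∃ x ∈ e, A ≤ x ∧ x ≤ B := by
      rintro A B hA hB ⟨x, hx, k, h1, h2⟩
      have h3 := hw x hx
      have hk : k = 0 := by
        have e1 : k < 1 :=
          lt_of_mul_lt_mul_left (a := (n : ℤ)) (by linarith) (by positivity)
        have e2 : -1 < k :=
          lt_of_mul_lt_mul_left (a := (n : ℤ)) (by linarith) (by positivity)
        omega
      subst hk
      exact ⟨x, hx, by linarith, by linarith⟩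
    have hmid : Hit n e (q (ℓ + 2)) (q (2 * ℓ + 2)) := by
      have := hh ℓ
      rwa [arc2.1, arc2.2] at this
    have hmiss : ¬ Hit n e (q 0) (q (ℓ + 1)) := by
      intro h0
      apply heH
      refine ⟨⟨hs, hc⟩, fun i => ?_⟩
      -- reduce the index modulo the number of points
      have g0 := Int.emod_add_mul_ediv i ((2 * (ℓ + 1) + 1 : ℕ) : ℤ)
      have g1 := Int.emod_nonneg i (show ((2 * (ℓ + 1) + 1 : ℕ) : ℤ) ≠ 0 by omega)
      have g2 := Int.emod_lt_of_pos i (show (0 : ℤ) < (2 * (ℓ + 1) + 1 : ℕ) by omega)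
      set j := i % ((2 * (ℓ + 1) + 1 : ℕ) : ℤ)
      set k := i / ((2 * (ℓ + 1) + 1 : ℕ) : ℤ)
      rw [← g0, add_right_comm, hq.per_mul, hq.per_mul]
      apply Hit.shift
      push_cast at g2 ⊢
      rw [← add_assoc]
      have hcases : j = 0 ∨ (1 ≤ j ∧ j ≤ ℓ) ∨ j = ℓ + 1 ∨ j = ℓ + 2 ∨
          (ℓ + 3 ≤ j ∧ j ≤ 2 * ℓ + 2) := by omega
      rcases hcases with h | h | h | h | h
      · rw [h, zero_add]; exact h0
      · have := hh (j - 1)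
        rwa [(arc1 j h.1 h.2).1, (arc1 j h.1 h.2).2] at this
      · rw [h]
        exact hmid.mono m3.le (hq.mono.monotone (by omega))
      · rw [h]
        exact hmid.mono le_rfl (hq.mono.monotone (by omega))
      · have := hh (j - 2)
        rwa [(arc3 j h.1 h.2).1, (arc3 j h.1 h.2).2] at this
    have hmiss' : ∀ x ∈ e, q 0 ≤ x → q (ℓ + 1) < x := by
      intro x hx h0
      by_contra hlt
      exact hmiss ⟨x, hx, 0, by simpa using h0, by simpa using hlt⟩
    refine ⟨hc, hw, hmiss', ?_, ?_, ?_⟩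
    · have := hh (1 - 1)
      rw [(arc1 1 le_rfl (by omega)).1, (arc1 1 le_rfl (by omega)).2] at this
      obtain ⟨x, hx, h1, h2⟩ := hlin _ _ (hq.mono (by omega)) (hq.mono.monotone (by omega)) this
      have := hq.mono (show (0 : ℤ) < 1 by omega)
      refine ⟨x, hx, (hmiss' x hx (by omega)).le, ?_⟩
      rwa [show (ℓ + 2 : ℤ) = 1 + ℓ + 1 by ring]
    · -- the arc from the last point wraps around to the `ℓ`-th one
      have := hh (2 * ℓ + 2 - 2)
      rw [(arc3 (2 * ℓ + 2) (by omega) le_rfl).1, (arc3 (2 * ℓ + 2) (by omega) le_rfl).2,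
        show (2 * ℓ + 2 + ℓ + 1 : ℤ) = ℓ + (2 * ℓ + 3) by ring, hper] at this
      obtain ⟨x, hx, k, h1, h2⟩ := this
      have h3 := hw x hx
      have h4 := hq.mono (show (ℓ : ℤ) < ℓ + 1 by omega)
      have h5 := hq.mono (show (ℓ : ℤ) < 2 * ℓ + 2 by omega)
      have e1 : k < 2 :=
        lt_of_mul_lt_mul_left (a := (n : ℤ)) (by linarith) (by positivity)
      have e2 : -1 < k :=
        lt_of_mul_lt_mul_left (a := (n : ℤ)) (by linarith) (by positivity)
      refine ⟨x, hx, ?_⟩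
      have hk : k = 0 ∨ k = 1 := by omega
      rcases hk with rfl | rfl
      · right; linarith
      · left
        by_contra hc
        have := hmiss' x hx (by omega)
        linarith
    · obtain ⟨x, hx, h1, h2⟩ := hlin _ _ (hq.mono (by omega)) le_rfl hmid
      exact ⟨x, hx, h1⟩
  · rintro e hc hw ⟨u, hu, hu'⟩ ⟨v, hv, hv'⟩ ⟨z, hz, hz1, hz2⟩
    have hwu := hw u hu
    have hwv := hw v hv
    have hs : e ⊆ Finset.Ico (q (-1) + 1) (q (-1) + 1 + n) := by
      intro x hx
      have := hw x hx
      rw [Finset.mem_Ico]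
      omega
    simp only [Fam, Finset.mem_filter, Finset.mem_powersetCard]
    refine ⟨⟨⟨hs, hc⟩, fun i => ?_⟩, ?_⟩
    · have g0 := Int.emod_add_mul_ediv i ((2 * (ℓ + 1) + 1 : ℕ) : ℤ)
      have g1 := Int.emod_nonneg i (show ((2 * (ℓ + 1) + 1 : ℕ) : ℤ) ≠ 0 by omega)
      have g2 := Int.emod_lt_of_pos i (show (0 : ℤ) < (2 * (ℓ + 1) + 1 : ℕ) by omega)
      set j := i % ((2 * (ℓ + 1) + 1 : ℕ) : ℤ)
      set k := i / ((2 * (ℓ + 1) + 1 : ℕ) : ℤ)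
      rw [← g0, add_right_comm, hq.per_mul, hq.per_mul]
      apply Hit.shift
      push_cast at g2 ⊢
      have hcases : j = 0 ∨ (1 ≤ j ∧ j ≤ ℓ + 1) ∨ (ℓ + 2 ≤ j ∧ j ≤ 2 * ℓ + 2) := by omega
      rcases hcases with h | h | h
      · rw [h, zero_add]
        exact ⟨z, hz, 0, by linarith, by linarith⟩
      · have e1 := hq.mono.monotone h.2
        have e2 := hq.mono.monotone (show (ℓ + 2 : ℤ) ≤ j + (ℓ + 1) by omega)
        exact ⟨v, hv, 0, by linarith, by linarith⟩
      · have e1 := hq.mono.monotone h.2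
        have e2 := hq.mono.monotone (show 0 + (2 * ℓ + 3 : ℤ) ≤ j + (ℓ + 1) by omega)
        rw [hper] at e2
        exact ⟨u, hu, 1, by linarith, by linarith⟩
    · rintro ⟨-, hh⟩
      have h := hh ℓ
      rw [arc2.1, arc2.2] at h
      obtain ⟨x, hx, k, h1, h2⟩ := h
      have h3 := hw x hx
      have e1 : k < 1 :=
        lt_of_mul_lt_mul_left (a := (n : ℤ)) (by linarith) (by positivity)
      have e2 : 0 < k :=
        lt_of_mul_lt_mul_left (a := (n : ℤ)) (by linarith) (by positivity)
      omega

-- STATEMENT 15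
theorem min_HnC_increasing (n r ℓ : ℕ) (hℓ : 1 ≤ ℓ) (hr : 3 ≤ r)
    (hn1 : 3 * r - 5 ≤ n) (hn2 : 2 * ℓ + 3 ≤ n) :
    sInf {k | ∃ w : Fin (2 * ℓ + 1) → Fin n, SemiValid ℓ w ∧ (HnC r ℓ w).card = k} <
      sInf {k | ∃ w : Fin (2 * (ℓ + 1) + 1) → Fin n,
        SemiValid (ℓ + 1) w ∧ (HnC r (ℓ + 1) w).card = k} := by
  have hne : {k | ∃ w : Fin (2 * (ℓ + 1) + 1) → Fin n,
      SemiValid (ℓ + 1) w ∧ (HnC r (ℓ + 1) w).card = k}.Nonempty := by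
    obtain ⟨q, hq⟩ := exists_lift n (ℓ + 1) (by omega)
    obtain ⟨w, hw, -⟩ := lift_semiValid n r (ℓ + 1) (by omega) q hq
    exact ⟨_, w, hw, rfl⟩
  -- the set is nonempty, so the infimum is attained rather than the junk value `0`
  obtain ⟨w, hw, hwc⟩ := Nat.sInf_mem hne
  rw [← hwc]
  obtain ⟨q, hq, hqc⟩ := semiValid_lift n r (ℓ + 1) (by omega) w hw
  obtain ⟨a, ha⟩ := hq.exists_unbalanced
  have hp := hq.reindex a
  have hlt := fam_skip_card_lt n r ℓ hℓ hr hn1 hn2 (fun j => q (j + a)) hp (by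
    simpa [add_comm] using ha)
  obtain ⟨w', hw', hwc'⟩ := lift_semiValid n r ℓ hℓ _ hp.skip
  refine lt_of_le_of_lt (Nat.sInf_le ⟨w', hw', rfl⟩) ?_
  rw [hwc', hqc, ← fam_reindex n r (ℓ + 1) q a]
  have hn : 0 < n := by omega
  rw [fam_card_eq n r ℓ hn _ 0 _, fam_card_eq n r (ℓ + 1) hn _ 0 _]
  exact hlt
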